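/- Let (A, τ, S, (A_I), (E_I)) be an A_0-valued white noise and let (c_t)_{t≥0} be a centred, norm-continuous additive cocycle for the shift S. Let 0 = s_0 < s_1 < … < s_n = t be a partition of [0, t] and let y_j ∈ A_{[0, s_j]} for j = 0, …, n−1. Set I := Σ_{j=0}^{n−1} (c_{s_{j+1}} − c_{s_j}) y_j. Then E_0(I* I) = Σ_{j=0}^{n−1} (s_{j+1} − s_j) · E_0(y_j* E_0(c_1* c_1) y_j), and consequently ‖I‖₂² = Σ_{j=0}^{n−1} (s_{j+1} − s_j) · τ(y_j* E_0(c_1* c_1) y_j) (the Itô isometry for simple adapted processes). -/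

import Mathlib

open scoped ComplexOrder

/-- A faithful tracial state on a unital C*-algebra. -/
structure IsTracialState {A : Type*} [CStarAlgebra A] (τ : A →ₗ[ℂ] ℂ) : Prop where
  map_one : τ 1 = 1
  pos : ∀ x : A, 0 ≤ τ (star x * x)
  tracial : ∀ x y : A, τ (x * y) = τ (y * x)
  bounded : ∀ x : A, ‖τ x‖ ≤ ‖x‖
  faithful : ∀ x : A, τ (star x * x) = 0 → x = 0

/-- A (trace-preserving) conditional expectation onto a subset `B` of `A`. -/
structure IsCondExp {A : Type*} [CStarAlgebra A] (τ : A →ₗ[ℂ] ℂ) (B : Set A)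
    (E : A →ₗ[ℂ] A) : Prop where
  mem_range : ∀ x, E x ∈ B
  map_of_mem : ∀ b ∈ B, E b = b
  bimodule : ∀ a ∈ B, ∀ c ∈ B, ∀ x, E (a * x * c) = a * E x * c
  map_star : ∀ x, E (star x) = star (E x)
  contractive : ∀ x, ‖E x‖ ≤ ‖x‖
  trace_eq : ∀ x, τ (E x) = τ x

/-- An `A₀`-valued white noise `(A, τ, S, (A_I), (E_I))`.  The filtration is indexed by
closed intervals `[a, b]` of `ℝ` with (possibly infinite) endpoints `a b : EReal`. -/
structure WhiteNoise (A : Type*) [CStarAlgebra A] (τ : A →ₗ[ℂ] ℂ) where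
  tracial : IsTracialState τ
  /-- the filtration algebra `A_{[a,b]}` -/
  alg : EReal → EReal → StarSubalgebra ℂ A
  alg_isClosed : ∀ a b, IsClosed (alg a b : Set A)
  alg_mono : ∀ a b a' b' : EReal, a' ≤ a → b ≤ b' → (alg a b : Set A) ⊆ alg a' b'
  /-- the distinguished subalgebra `A₀` -/
  A0 : StarSubalgebra ℂ A
  A0_isClosed : IsClosed (A0 : Set A)
  A0_le : ∀ a b, (A0 : Set A) ⊆ alg a b
  /-- the conditional expectation `E_{[a,b]}` onto `A_{[a,b]}` -/
  E : EReal → EReal → (A →ₗ[ℂ] A)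
  /-- the conditional expectation `E₀` onto `A₀` -/
  E0 : A →ₗ[ℂ] A
  E_condExp : ∀ a b, IsCondExp τ (alg a b) (E a b)
  E0_condExp : IsCondExp τ A0 E0
  /-- the white noise shift: a one-parameter group of trace-preserving `*`-automorphisms -/
  S : ℝ → (A ≃⋆ₐ[ℂ] A)
  S_zero : ∀ x, S 0 x = x
  S_add : ∀ s t x, S (s + t) x = S s (S t x)
  S_trace : ∀ t x, τ (S t x) = τ x
  S_alg : ∀ (t : ℝ) (a b : EReal),
    (S t) '' (alg a b : Set A) = (alg (a + (t : EReal)) (b + (t : EReal)) : Set A)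
  S_fix : ∀ t, ∀ a ∈ A0, S t a = a
  E0_S : ∀ t x, E0 (S t x) = E0 x
  /-- independence over `A₀`: `E_I ∘ E_J = E₀` whenever the interiors of `I`, `J` are disjoint -/
  indep : ∀ a b c d : EReal,
    (∀ x : ℝ, ¬((a < (x : EReal) ∧ (x : EReal) < b) ∧ (c < (x : EReal) ∧ (x : EReal) < d))) →
    ∀ y, E a b (E c d y) = E0 y
  /-- the tower property `E₀ ∘ E_I = E₀` -/
  tower : ∀ (a b : EReal) (y : A), E0 (E a b y) = E0 y

/-!
Factor `c (s (j + 1)) - c (s j) = S (s j) (c (s (j + 1) - s j))`. This increment is centred and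
lies in the algebra of `[s j, s (j + 1)]`, while the partial sum before it and `y j` lie in that of
`[0, s j]`. Independence therefore kills the cross terms and lets `E₀` act on the squared increment
inside `y j* · y j`. The same orthogonality makes `h ↦ E₀(c_h* c_h)` additive on `[0, ∞)`, so by
continuity it is `h • E₀(c_1* c_1)`.
-/

open scoped NNReal

lemma denseRange_nnratCast_nnreal : DenseRange (NNRat.cast : ℚ≥0 → ℝ≥0) :=
  dense_of_exists_between fun a b hab => by
    obtain ⟨q, hq, haq, hqb⟩ := (NNReal.lt_iff_exists_rat_btwn a b).1 hab
    lift q to ℚ≥0 using hq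
    have hcast : Real.toNNReal ((q : ℚ) : ℝ) = q := by
      rw [Rat.cast_nnratCast]
      exact Real.toNNReal_coe (r := q)
    rw [hcast] at haq hqb
    exact ⟨q, Set.mem_range_self q, haq, hqb⟩

lemma map_nnreal_smul {M N G : Type*} [AddCommMonoid M] [Module ℝ≥0 M] [TopologicalSpace M]
    [ContinuousSMul ℝ≥0 M] [AddCommMonoid N] [Module ℝ≥0 N] [TopologicalSpace N] [T2Space N]
    [ContinuousSMul ℝ≥0 N] [FunLike G M N] [AddMonoidHomClass G M N] (f : G) (hf : Continuous f)
    (r : ℝ≥0) (x : M) : f (r • x) = r • f x :=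
  suffices (fun r : ℝ≥0 => f (r • x)) = fun r => r • f x from congr_fun this r
  denseRange_nnratCast_nnreal.equalizer (by fun_prop) (by fun_prop)
    (funext fun q => map_nnratCast_smul f ℝ≥0 ℝ≥0 q x)

section Ito

variable {A : Type*} [CStarAlgebra A] {τ : A →ₗ[ℂ] ℂ}

namespace IsCondExp

variable {B : Set A} {E : A →ₗ[ℂ] A}

lemma apply_apply (hE : IsCondExp τ B E) (x : A) : E (E x) = E x :=
  hE.map_of_mem _ (hE.mem_range x)

lemma continuous (hE : IsCondExp τ B E) : Continuous E :=
  AddMonoidHomClass.continuous_of_bound E 1 fun x => by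
    simpa only [one_mul] using hE.contractive x

end IsCondExp

namespace WhiteNoise

section Independence

variable (W : WhiteNoise A τ) {r u v : EReal} {a b x : A}

lemma S_mem_alg (t : ℝ) (hx : x ∈ W.alg u v) : W.S t x ∈ W.alg (u + t) (v + t) := by
  rw [← SetLike.mem_coe, ← W.S_alg]
  exact Set.mem_image_of_mem _ hx

lemma E_apply_of_mem_alg (hx : x ∈ W.alg u v) : W.E r u x = W.E0 x := by
  have hindep : W.E r u (W.E u v x) = W.E0 x :=
    W.indep r u u v (fun _ hz => lt_asymm hz.1.2 hz.2.1) x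
  rwa [(W.E_condExp u v).map_of_mem x hx] at hindep

lemma E0_mul_mul (ha : a ∈ W.alg r u) (hx : x ∈ W.alg u v) (hb : b ∈ W.alg r u) :
    W.E0 (a * x * b) = W.E0 (a * W.E0 x * b) := by
  rw [← W.tower r u, (W.E_condExp r u).bimodule a ha b hb, W.E_apply_of_mem_alg hx]

lemma E0_mul_mul_eq_zero (ha : a ∈ W.alg r u) (hx : x ∈ W.alg u v) (hx0 : W.E0 x = 0)
    (hb : b ∈ W.alg r u) : W.E0 (a * x * b) = 0 := by
  rw [W.E0_mul_mul ha hx hb, hx0, mul_zero, zero_mul, map_zero]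

lemma E0_star_add_mul_self (ha : a ∈ W.alg r u) (hx : x ∈ W.alg u v) (hx0 : W.E0 x = 0)
    (hb : b ∈ W.alg r u) :
    W.E0 (star (a + x * b) * (a + x * b)) =
      W.E0 (star a * a) + W.E0 (star b * W.E0 (star x * x) * b) := by
  have hexpand : star (a + x * b) * (a + x * b) =
      star a * a + star a * x * b + star (star a * x * b) + star b * (star x * x) * b := by
    simp only [star_add, star_mul, star_star]
    noncomm_ring
  have hcross : W.E0 (star a * x * b) = 0 := W.E0_mul_mul_eq_zero (star_mem ha) hx hx0 hb
  rw [hexpand, map_add, map_add, map_add, W.E0_condExp.map_star, hcross, star_zero, add_zero,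
    add_zero, W.E0_mul_mul (star_mem hb) (mul_mem (star_mem hx) hx) hb]

end Independence

/-- An additive cocycle `(c_t)_{t ≥ 0}` for the shift of a white noise, adapted to its filtration.
It is encoded as a function on `ℝ` of which only the values on `[0, ∞)` are constrained. -/
structure IsAdditiveCocycle (W : WhiteNoise A τ) (c : ℝ → A) : Prop where
  mem_alg : ∀ t : ℝ, 0 ≤ t → c t ∈ W.alg 0 (t : EReal)
  map_add : ∀ s t : ℝ, 0 ≤ s → 0 ≤ t → c (s + t) = W.S t (c s) + c t

/-- A centred additive cocycle: one whose values have conditional expectation zero over `A₀`. -/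
structure IsCentredCocycle (W : WhiteNoise A τ) (c : ℝ → A) : Prop
    extends W.IsAdditiveCocycle c where
  E0_eq_zero : ∀ t : ℝ, 0 ≤ t → W.E0 (c t) = 0

variable {W : WhiteNoise A τ} {c : ℝ → A} {u v : ℝ}

namespace IsAdditiveCocycle

lemma map_zero (hc : W.IsAdditiveCocycle c) : c 0 = 0 := by
  simpa only [add_zero, W.S_zero, left_eq_add] using hc.map_add 0 0 le_rfl le_rfl

lemma sub_eq_S (hc : W.IsAdditiveCocycle c) (hu : 0 ≤ u) (huv : u ≤ v) :
    c v - c u = W.S u (c (v - u)) := by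
  rw [sub_eq_iff_eq_add, ← hc.map_add _ _ (sub_nonneg.2 huv) hu, sub_add_cancel]

lemma sub_mem_alg (hc : W.IsAdditiveCocycle c) (hu : 0 ≤ u) (huv : u ≤ v) :
    c v - c u ∈ W.alg u v := by
  have hshift := W.S_mem_alg u (hc.mem_alg _ (sub_nonneg.2 huv))
  rwa [← hc.sub_eq_S hu huv, zero_add, ← EReal.coe_add, sub_add_cancel] at hshift

lemma E0_star_sub_mul_sub (hc : W.IsAdditiveCocycle c) (hu : 0 ≤ u) (huv : u ≤ v) :
    W.E0 (star (c v - c u) * (c v - c u)) = W.E0 (star (c (v - u)) * c (v - u)) := by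
  rw [hc.sub_eq_S hu huv, ← map_star, ← map_mul, W.E0_S]

end IsAdditiveCocycle

namespace IsCentredCocycle

lemma E0_sub_eq_zero (hc : W.IsCentredCocycle c) (hu : 0 ≤ u) (huv : u ≤ v) :
    W.E0 (c v - c u) = 0 := by
  rw [map_sub, hc.E0_eq_zero v (hu.trans huv), hc.E0_eq_zero u hu, sub_zero]

lemma E0_star_add_sub_mul_self (hc : W.IsCentredCocycle c) (hu : 0 ≤ u) (huv : u ≤ v)
    {r : EReal} {a b : A} (ha : a ∈ W.alg r u) (hb : b ∈ W.alg r u) :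
    W.E0 (star (a + (c v - c u) * b) * (a + (c v - c u) * b)) =
      W.E0 (star a * a) + W.E0 (star b * W.E0 (star (c (v - u)) * c (v - u)) * b) := by
  rw [W.E0_star_add_mul_self ha (hc.sub_mem_alg hu huv) (hc.E0_sub_eq_zero hu huv) hb,
    hc.E0_star_sub_mul_sub hu huv]

lemma E0_star_mul_self_add (hc : W.IsCentredCocycle c) (hu : 0 ≤ u) (hv : 0 ≤ v) :
    W.E0 (star (c (u + v)) * c (u + v)) =
      W.E0 (star (c u) * c u) + W.E0 (star (c v) * c v) := by
  have hpyth := hc.E0_star_add_sub_mul_self hu (le_add_of_nonneg_right hv) (hc.mem_alg u hu)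
    (one_mem _)
  simpa only [star_one, one_mul, mul_one, add_sub_cancel, add_sub_cancel_left,
    W.E0_condExp.apply_apply] using hpyth

lemma E0_star_mul_self_eq_smul (hc : W.IsCentredCocycle c) (hcont : ContinuousOn c (Set.Ici 0))
    {h : ℝ} (hh : 0 ≤ h) :
    W.E0 (star (c h) * c h) = (h : ℂ) • W.E0 (star (c 1) * c 1) := by
  let quadVar : ℝ≥0 →+ A :=
    { toFun := fun r => W.E0 (star (c r) * c r)
      map_zero' := by simp only [NNReal.coe_zero, hc.map_zero, mul_zero, map_zero]
      map_add' := fun r r' => hc.E0_star_mul_self_add r.2 r'.2 }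
  have hquadVar : Continuous quadVar := by
    have hcont' : Continuous fun r : ℝ≥0 => c r :=
      hcont.comp_continuous NNReal.continuous_coe fun r => r.2
    have hsq : Continuous fun r : ℝ≥0 => star (c r) * c r := hcont'.star.mul hcont'
    exact W.E0_condExp.continuous.comp hsq
  lift h to ℝ≥0 using hh
  calc W.E0 (star (c h) * c h) = quadVar (h • 1) := by rw [smul_eq_mul, mul_one]; rfl
    _ = h • quadVar 1 := map_nnreal_smul quadVar hquadVar h 1
    _ = ((h : ℝ) : ℂ) • W.E0 (star (c 1) * c 1) := by
      rw [NNReal.smul_def, Complex.coe_smul]; rfl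

end IsCentredCocycle

end WhiteNoise

/-- The integral `∑_{j < n} (c_{s_{j+1}} - c_{s_j}) y_j` of the simple process taking the value
`y j` on `[s j, s (j + 1))` against the increments of `c`. -/
def simpleIntegral {R : Type*} [NonUnitalNonAssocRing R] (c : ℝ → R) (s : ℕ → ℝ) (y : ℕ → R)
    (n : ℕ) : R :=
  ∑ j ∈ Finset.range n, (c (s (j + 1)) - c (s j)) * y j

lemma simpleIntegral_succ {R : Type*} [NonUnitalNonAssocRing R] (c : ℝ → R) (s : ℕ → ℝ)
    (y : ℕ → R) (n : ℕ) :
    simpleIntegral c s y (n + 1) =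
      simpleIntegral c s y n + (c (s (n + 1)) - c (s n)) * y n :=
  Finset.sum_range_succ _ n

namespace WhiteNoise

variable {W : WhiteNoise A τ} {c : ℝ → A} {s : ℕ → ℝ} {y : ℕ → A} {n : ℕ}

lemma IsAdditiveCocycle.simpleIntegral_mem_alg (hc : W.IsAdditiveCocycle c) (hs0 : 0 ≤ s 0)
    (hs : MonotoneOn s (Set.Iic n)) (hy : ∀ j < n, y j ∈ W.alg 0 (s j)) :
    simpleIntegral c s y n ∈ W.alg 0 (s n) := by
  refine sum_mem fun j hj => ?_
  have hjn : j < n := Finset.mem_range.1 hj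
  have hsj : 0 ≤ s j := hs0.trans (hs n.zero_le hjn.le j.zero_le)
  have hsj' : s j ≤ s (j + 1) := hs hjn.le hjn j.le_succ
  have hsn : s (j + 1) ≤ s n := hs hjn Set.self_mem_Iic hjn
  refine mul_mem (W.alg_mono _ _ _ _ ?_ ?_ (hc.sub_mem_alg hsj hsj'))
    (W.alg_mono _ _ _ _ le_rfl ?_ (hy j hjn))
  · exact_mod_cast hsj
  · exact_mod_cast hsn
  · exact_mod_cast hsj'.trans hsn

theorem IsCentredCocycle.E0_star_simpleIntegral_mul_self (hc : W.IsCentredCocycle c)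
    (hcont : ContinuousOn c (Set.Ici 0)) (hs0 : 0 ≤ s 0) (hs : MonotoneOn s (Set.Iic n))
    (hy : ∀ j < n, y j ∈ W.alg 0 (s j)) :
    W.E0 (star (simpleIntegral c s y n) * simpleIntegral c s y n) =
      ∑ j ∈ Finset.range n, ((s (j + 1) - s j : ℝ) : ℂ) •
        W.E0 (star (y j) * W.E0 (star (c 1) * c 1) * y j) := by
  induction n with
  | zero => simp [simpleIntegral]
  | succ n ih =>
    have hs' : MonotoneOn s (Set.Iic n) := hs.mono (Set.Iic_subset_Iic.2 n.le_succ)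
    have hy' : ∀ j < n, y j ∈ W.alg 0 (s j) := fun j hj => hy j (hj.trans n.lt_succ_self)
    have hsn : 0 ≤ s n := hs0.trans (hs' n.zero_le Set.self_mem_Iic n.zero_le)
    have hstep : s n ≤ s (n + 1) := hs n.le_succ Set.self_mem_Iic n.le_succ
    rw [simpleIntegral_succ, Finset.sum_range_succ,
      hc.E0_star_add_sub_mul_self hsn hstep (hc.simpleIntegral_mem_alg hs0 hs' hy')
        (hy n n.lt_succ_self),
      ih hs' hy', hc.E0_star_mul_self_eq_smul hcont (sub_nonneg.2 hstep),
      mul_smul_comm, smul_mul_assoc, map_smul]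

end WhiteNoise

end Ito

/-- The Itô isometry for simple adapted processes: for a centred norm-continuous additive
cocycle `c`, a partition `0 = s_0 < … < s_n = t` and adapted `y_j ∈ A_{[0, s_j]}`, the
stochastic integral `I = Σ_j (c_{s_{j+1}} - c_{s_j}) y_j` satisfies
`E₀(I* I) = Σ_j (s_{j+1} - s_j) • E₀(y_j* E₀(c_1* c_1) y_j)` and
`‖I‖₂² = Σ_j (s_{j+1} - s_j) τ(y_j* E₀(c_1* c_1) y_j)`. -/
theorem ito_isometry_simple_processes {A : Type*} [CStarAlgebra A]
    (τ : A →ₗ[ℂ] ℂ) (W : WhiteNoise A τ) (c : ℝ → A)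
    (hadapt : ∀ t : ℝ, 0 ≤ t → c t ∈ W.alg 0 (t : EReal))
    (hcoc : ∀ s t : ℝ, 0 ≤ s → 0 ≤ t → c (s + t) = W.S t (c s) + c t)
    (hcentred : ∀ t : ℝ, 0 ≤ t → W.E0 (c t) = 0)
    (hcont : ContinuousOn c (Set.Ici 0))
    (t : ℝ) (ht : 0 ≤ t)
    (n : ℕ) (hn : 1 ≤ n) (s : ℕ → ℝ)
    (hs0 : s 0 = 0) (hsn : s n = t)
    (hmono : ∀ j < n, s j < s (j + 1))
    (y : ℕ → A) (hy : ∀ j < n, y j ∈ W.alg 0 ((s j : ℝ) : EReal))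
    (I : A) (hI : I = ∑ j ∈ Finset.range n, (c (s (j + 1)) - c (s j)) * y j) :
    W.E0 (star I * I) =
      ∑ j ∈ Finset.range n, ((s (j + 1) - s j : ℝ) : ℂ) •
        W.E0 (star (y j) * W.E0 (star (c 1) * c 1) * y j) ∧
    τ (star I * I) =
      ∑ j ∈ Finset.range n, ((s (j + 1) - s j : ℝ) : ℂ) *
        τ (star (y j) * W.E0 (star (c 1) * c 1) * y j) := by
  have hc : W.IsCentredCocycle c := ⟨⟨hadapt, hcoc⟩, hcentred⟩
  have hs : MonotoneOn s (Set.Iic n) := (strictMonoOn_Iic_of_lt_succ hmono).monotoneOn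
  have hE0 : W.E0 (star I * I) = ∑ j ∈ Finset.range n, ((s (j + 1) - s j : ℝ) : ℂ) •
      W.E0 (star (y j) * W.E0 (star (c 1) * c 1) * y j) := by
    rw [hI]
    exact hc.E0_star_simpleIntegral_mul_self hcont hs0.ge hs hy
  refine ⟨hE0, ?_⟩
  rw [← W.E0_condExp.trace_eq, hE0, map_sum]
  simp only [map_smul, smul_eq_mul, W.E0_condExp.trace_eq]
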